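/- Let G be a finite group, let U be the left regular representation of G on ℂ[G] (U_g |h⟩ = |g·h⟩), and let χ : G → ℂˣ be a one-dimensional character of G. Then for every n ≥ 1, the eigenspace {v ∈ (ℂ[G])^{⊗n} : U_g^{⊗n} v = χ(g)·v for all g ∈ G} has dimension |G|^{n−1}. Consequently, for fixed χ = χ_α, the |G|^{n−1} orthonormal vectors |φ_{α, g₂,…,g_n}⟩ = (Z^α ⊗ X_{g₂} ⊗ ⋯ ⊗ X_{g_n}) |GHZ_n⟩, with g₂,…,g_n ∈ G, form an orthonormal basis of this eigenspace. -/

import Mathlib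

/-- `ℂ[G]^{⊗n}`, realized as the space of functions on `n`-tuples of group elements,
with orthonormal basis the delta functions `|h₁ … h_n⟩`. -/
abbrev TensorPowSpace (G : Type) (n : ℕ) : Type := (Fin n → G) → ℂ

/-- The `n`-th tensor power `U_g^{⊗n}` of the left regular representation:
`U_g^{⊗n} |h₁ … h_n⟩ = |g h₁, …, g h_n⟩`. -/
def Un (G : Type) [Group G] (n : ℕ) (g : G) :
    TensorPowSpace G n →ₗ[ℂ] TensorPowSpace G n where
  toFun f := fun x => f (fun i => g⁻¹ * x i)
  map_add' _ _ := rfl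
  map_smul' _ _ := rfl

/-- The operator `Z^χ ⊗ X_{g 1} ⊗ ⋯ ⊗ X_{g (n-1)}` (with `g 0 = 1`), where
`Z^χ = ∑_h χ(h⁻¹)|h⟩⟨h|` acts on the first factor and `X_a = ∑_h |h·a⟩⟨h|` is the right
regular representation acting on the remaining factors. -/
def ZXop (G : Type) [Group G] (n : ℕ) [NeZero n] (χ : G →* ℂˣ) (g : Fin n → G) :
    TensorPowSpace G n →ₗ[ℂ] TensorPowSpace G n where
  toFun f := fun x => ((χ (x 0)⁻¹ : ℂˣ) : ℂ) * f (fun i => x i * (g i)⁻¹)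
  map_add' f f' := by
    funext x
    simp [mul_add]
  map_smul' c f := by
    funext x
    simp only [Pi.smul_apply, smul_eq_mul, RingHom.id_apply]
    ring

open Classical in
/-- The normalized GHZ state `|GHZ_n⟩ = |G|^{-1/2} ∑_g |g⟩^{⊗n}`. -/
noncomputable def GHZvec (G : Type) [Group G] [Fintype G] (n : ℕ) [NeZero n] :
    TensorPowSpace G n :=
  fun x => if ∀ i, x i = x 0 then ((Real.sqrt (Fintype.card G) : ℝ) : ℂ)⁻¹ else 0

/-- The state `|φ_{χ,g}⟩ = (Z^χ ⊗ X_{g 1} ⊗ ⋯ ⊗ X_{g (n-1)}) |GHZ_n⟩`. -/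
noncomputable def phiVec (G : Type) [Group G] [Fintype G] (n : ℕ) [NeZero n]
    (χ : G →* ℂˣ) (g : Fin n → G) : TensorPowSpace G n :=
  ZXop G n χ g (GHZvec G n)

/-- The inner product on `ℂ[G]^{⊗n}` for which the delta functions form an orthonormal
basis. -/
noncomputable def hsInner (G : Type) [Fintype G] (n : ℕ) (f f' : TensorPowSpace G n) : ℂ :=
  ∑ x : Fin n → G, (starRingEnd ℂ) (f x) * f' x

/-- The `χ`-eigenspace (the `χ`-symmetric subspace) of `U^{⊗n}`. -/
noncomputable def chiEigenspace (G : Type) [Group G] (n : ℕ) (χ : G →* ℂˣ) :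
    Submodule ℂ (TensorPowSpace G n) where
  carrier := {f | ∀ a : G, Un G n a f = ((χ a : ℂˣ) : ℂ) • f}
  add_mem' := by
    intro f f' hf hf' a
    simp [map_add, hf a, hf' a, smul_add]
  zero_mem' := by
    intro a
    simp
  smul_mem' := by
    intro c f hf a
    simp only [map_smul, hf a]
    rw [smul_comm]

/-!
Diagonal left translation by `G` acts freely on `n`-tuples, and the tuples with `g 0 = 1` represent
its orbits. A `χ`-eigenvector is therefore the same as an arbitrary function on these `|G|^(n-1)`
tuples. Since `χ` is unitary, the inner product of two eigenvectors is `|G|` times the inner product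
of their restrictions. The GHZ state is invariant and `Z^χ` shifts the character by `χ`, so
`|φ_{χ,g}⟩` is an eigenvector; its restriction is `|G|^{-1/2}` times the delta function at `g`.
-/

section NormalizedTuple

/-- The tuples of group elements whose `i₀`-th entry is `1`. When `G` is a group, they represent
the orbits of the diagonal left translation, each orbit exactly once. -/
abbrev NormalizedTuple (G : Type*) [One G] {ι : Type*} (i₀ : ι) : Type _ :=
  {g : ι → G // g i₀ = 1}

variable {ι G : Type*} [Group G] (i₀ : ι)

/-- The decomposition `x = h · g` of a tuple of group elements into its `i₀`-th entry `h`, which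
is the coordinate along the orbit, and the normalized representative `g` of the orbit. -/
@[simps]
def tupleEquivProd : (ι → G) ≃ G × NormalizedTuple G i₀ where
  toFun x := (x i₀, ⟨fun i => (x i₀)⁻¹ * x i, inv_mul_cancel _⟩)
  invFun p := fun i => p.1 * p.2.1 i
  left_inv x := by simp
  right_inv := by
    rintro ⟨h, g, hg⟩
    simp [hg]

theorem card_normalizedTuple [Finite ι] [Finite G] :
    Nat.card (NormalizedTuple G i₀) = Nat.card G ^ (Nat.card ι - 1) := by
  have : Nonempty ι := ⟨i₀⟩
  refine Nat.eq_of_mul_eq_mul_left (Nat.card_pos (α := G)) ?_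
  rw [← Nat.card_prod, ← Nat.card_congr (tupleEquivProd i₀), Nat.card_fun,
    mul_pow_sub_one Nat.card_pos.ne']

end NormalizedTuple

theorem norm_map_units_eq_one {M 𝕜 : Type*} [Monoid M] [NormedDivisionRing 𝕜]
    (χ : M →* 𝕜ˣ) {a : M} (ha : IsOfFinOrder a) : ‖(χ a : 𝕜)‖ = 1 :=
  (((Units.coeHom 𝕜).comp χ).isOfFinOrder ha).norm_eq_one

section Eigenspace

variable {G : Type} [Group G] {n : ℕ} {χ ψ : G →* ℂˣ} {f f' : TensorPowSpace G n}

theorem mem_chiEigenspace_iff :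
    f ∈ chiEigenspace G n χ ↔ ∀ a x, f (fun i => a * x i) = (χ a : ℂ)⁻¹ * f x := by
  have eigen_iff : f ∈ chiEigenspace G n χ ↔ ∀ a x, f (fun i => a⁻¹ * x i) = χ a * f x :=
    forall_congr' fun _ => funext_iff
  rw [eigen_iff, (Equiv.inv G).forall_congr_left]
  simp

variable [NeZero n]

variable (n χ) in
/-- A `χ`-eigenvector is determined by its values on the tuples with `g 0 = 1`, and these values
are arbitrary: restriction to them is an isomorphism, whose inverse extends by
`f x = χ(x 0)⁻¹ f ((x 0)⁻¹ x)`. -/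
noncomputable def chiEigenspaceEquiv :
    chiEigenspace G n χ ≃ₗ[ℂ] (NormalizedTuple G (0 : Fin n) → ℂ) where
  toFun f g := f.1 g.1
  map_add' _ _ := rfl
  map_smul' _ _ := rfl
  invFun c := ⟨fun x => (χ (x 0) : ℂ)⁻¹ * c (tupleEquivProd 0 x).2, by
    refine mem_chiEigenspace_iff.mpr fun a x => ?_
    simp [mul_assoc, mul_left_comm]⟩
  left_inv f := by
    ext x
    have translate := mem_chiEigenspace_iff.mp f.2 (x 0) fun i => (x 0)⁻¹ * x i
    simpa using translate.symm
  right_inv c := by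
    ext g
    simp [tupleEquivProd, g.2]

theorem ZXop_mem_chiEigenspace (g : Fin n → G) (hf : f ∈ chiEigenspace G n ψ) :
    ZXop G n χ g f ∈ chiEigenspace G n (χ * ψ) := by
  rw [mem_chiEigenspace_iff] at hf ⊢
  intro a x
  simp only [ZXop, LinearMap.coe_mk, AddHom.coe_mk, mul_assoc, hf, map_inv, map_mul, mul_inv_rev,
    MonoidHom.mul_apply, Units.val_mul, Units.val_inv_eq_inv_val]
  ring

variable [Fintype G]

theorem finrank_chiEigenspace :
    Module.finrank ℂ (chiEigenspace G n χ) = Fintype.card G ^ (n - 1) := by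
  classical
  rw [(chiEigenspaceEquiv n χ).finrank_eq, Module.finrank_fintype_fun_eq_card,
    ← Nat.card_eq_fintype_card, card_normalizedTuple, Nat.card_eq_fintype_card, Nat.card_fin]

theorem hsInner_eq_card_mul_sum [DecidableEq G]
    (hf : f ∈ chiEigenspace G n χ) (hf' : f' ∈ chiEigenspace G n χ) :
    hsInner G n f f' =
      Fintype.card G * ∑ g : NormalizedTuple G (0 : Fin n), starRingEnd ℂ (f g) * f' g := by
  rw [mem_chiEigenspace_iff] at hf hf'
  have translation_invariant (h : G) (g : Fin n → G) :
      starRingEnd ℂ (f fun i => h * g i) * f' (fun i => h * g i) =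
        starRingEnd ℂ (f g) * f' g := by
    rw [hf, hf', map_mul, mul_mul_mul_comm, Complex.conj_mul', norm_inv,
      norm_map_units_eq_one χ (isOfFinOrder_of_finite h)]
    simp
  calc
    hsInner G n f f' = ∑ h : G, ∑ g : NormalizedTuple G (0 : Fin n),
        starRingEnd ℂ (f fun i => h * g.1 i) * f' (fun i => h * g.1 i) := by
      rw [← Fintype.sum_prod_type']
      exact ((tupleEquivProd 0).symm.sum_comp fun x => starRingEnd ℂ (f x) * f' x).symm
    _ = Fintype.card G * ∑ g : NormalizedTuple G (0 : Fin n), starRingEnd ℂ (f g) * f' g := by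
      simp [translation_invariant]

end Eigenspace

section PhiVec

variable {G : Type} [Group G] [Fintype G] {n : ℕ} [NeZero n]

theorem GHZvec_mem_chiEigenspace_one : GHZvec G n ∈ chiEigenspace G n 1 := by
  classical
  simp [mem_chiEigenspace_iff, GHZvec]

theorem phiVec_mem_chiEigenspace (χ : G →* ℂˣ) (g : Fin n → G) :
    phiVec G n χ g ∈ chiEigenspace G n χ := by
  have mem_mul_one : phiVec G n χ g ∈ chiEigenspace G n (χ * 1) :=
    ZXop_mem_chiEigenspace g GHZvec_mem_chiEigenspace_one
  rwa [show χ * 1 = χ from mul_one χ] at mem_mul_one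

theorem phiVec_apply_normalizedTuple [DecidableEq G] (χ : G →* ℂˣ)
    (g k : NormalizedTuple G (0 : Fin n)) :
    phiVec G n χ g k = if g = k then (√(Fintype.card G) : ℂ)⁻¹ else 0 := by
  have diagonal_iff : (∀ i, k.1 i * (g.1 i)⁻¹ = 1) ↔ g = k := by
    simp only [mul_inv_eq_one, Subtype.ext_iff, funext_iff, eq_comm (a := k.1 _)]
  simp [phiVec, ZXop, GHZvec, g.2, k.2, diagonal_iff]

theorem hsInner_phiVec [DecidableEq G] (χ : G →* ℂˣ) (g g' : NormalizedTuple G (0 : Fin n)) :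
    hsInner G n (phiVec G n χ g) (phiVec G n χ g') = if g = g' then 1 else 0 := by
  have card_mul_inv_sq :
      (Fintype.card G : ℂ) * ((√(Fintype.card G) : ℂ)⁻¹ * (√(Fintype.card G) : ℂ)⁻¹) = 1 := by
    rw [← mul_inv, ← Complex.ofReal_mul, Real.mul_self_sqrt (Nat.cast_nonneg _)]
    simp
  rw [hsInner_eq_card_mul_sum (phiVec_mem_chiEigenspace χ g.1) (phiVec_mem_chiEigenspace χ g'.1)]
  simp only [phiVec_apply_normalizedTuple]
  split_ifs with h
  · simp [h, card_mul_inv_sq]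
  · simp [h]

variable (n) in
/-- The vectors `|φ_{χ,g}⟩` with `g 0 = 1` as a basis of the `χ`-eigenspace. The coordinates of
`f` are its values on the normalized tuples, scaled by `√|G|`. -/
noncomputable def phiBasis (χ : G →* ℂˣ) :
    Module.Basis (NormalizedTuple G (0 : Fin n)) ℂ (chiEigenspace G n χ) :=
  .ofEquivFun <| chiEigenspaceEquiv n χ ≪≫ₗ
    LinearEquiv.smulOfNeZero ℂ _ (√(Fintype.card G) : ℂ) (by simp)

theorem coe_phiBasis (χ : G →* ℂˣ) (g : NormalizedTuple G (0 : Fin n)) :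
    (phiBasis n χ g : TensorPowSpace G n) = phiVec G n χ g := by
  classical
  suffices phiBasis n χ g = ⟨phiVec G n χ g, phiVec_mem_chiEigenspace χ g.1⟩ from
    congrArg Subtype.val this
  rw [phiBasis, Module.Basis.coe_ofEquivFun, LinearEquiv.symm_apply_eq]
  ext k
  simp [chiEigenspaceEquiv, phiVec_apply_normalizedTuple, Pi.single_apply, eq_comm (a := k)]

theorem span_range_phiVec (χ : G →* ℂˣ) :
    Submodule.span ℂ (Set.range fun g : NormalizedTuple G (0 : Fin n) => phiVec G n χ g) =
      chiEigenspace G n χ :=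
  calc
    _ = Submodule.span ℂ ((chiEigenspace G n χ).subtype '' Set.range (phiBasis n χ)) := by
      simp only [← Set.range_comp, Function.comp_def, Submodule.subtype_apply, coe_phiBasis]
    _ = chiEigenspace G n χ := by
      rw [Submodule.span_image, (phiBasis n χ).span_eq, Submodule.map_subtype_top]

end PhiVec

open Classical in
/-- for every `n ≥ 1` and one-dimensional character `χ` of the finite group
`G`, the eigenspace `{v : U_g^{⊗n} v = χ(g) v ∀ g}` has dimension `|G|^{n-1}`, and the
`|G|^{n-1}` orthonormal vectors `|φ_{χ,g}⟩` (with `g 0 = 1`) form an orthonormal basis of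
it: they lie in the eigenspace, are orthonormal, and span it. -/
theorem chiEigenspace_dim_and_basis
    (G : Type) [Group G] [Fintype G] (n : ℕ) [NeZero n] (χ : G →* ℂˣ) :
    Module.finrank ℂ (chiEigenspace G n χ) = Fintype.card G ^ (n - 1) ∧
    (∀ g : Fin n → G, g 0 = 1 → phiVec G n χ g ∈ chiEigenspace G n χ) ∧
    (∀ g g' : Fin n → G, g 0 = 1 → g' 0 = 1 →
      hsInner G n (phiVec G n χ g) (phiVec G n χ g') = if g = g' then 1 else 0) ∧
    chiEigenspace G n χ =
      Submodule.span ℂ (Set.range fun g : {g : Fin n → G // g 0 = 1} =>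
        phiVec G n χ g.1) := by
  refine ⟨finrank_chiEigenspace, fun g _ => phiVec_mem_chiEigenspace χ g,
    fun g g' hg hg' => ?_, (span_range_phiVec χ).symm⟩
  simpa using hsInner_phiVec χ ⟨g, hg⟩ ⟨g', hg'⟩
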